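/- There exists a partition E of ℕ×ℕ into infinitely many infinite sets such that: (a) for every k ≥ 3 there is no (k,k)-tower of E-monochromatic functions; yet (b) Sel is not a P(Sel(E))-ideal, and moreover Sel is not a P(ED(E))-ideal. -/

import Mathlib

open Set

/-- An ideal on an (infinite) set: contains all finite sets, is proper,
closed under subsets and finite unions. -/
def IsIdeal {α : Type*} (I : Set (Set α)) : Prop :=
  (∀ s : Set α, s.Finite → s ∈ I) ∧ (Set.univ : Set α) ∉ I ∧
  (∀ s t : Set α, s ∈ I → t ⊆ s → t ∈ I) ∧
  (∀ s t : Set α, s ∈ I → t ∈ I → s ∪ t ∈ I)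

/-- `I` is a `P(J)`-ideal. -/
def IsPJIdeal {α : Type*} (I J : Set (Set α)) : Prop :=
  ∀ f : ℕ → Set α, (∀ n, f n ∈ I) → ∃ A ∈ I, ∀ n, f n \ A ∈ J

/-- Orthogonality of two ideals. -/
def Orth {α : Type*} (I J : Set (Set α)) : Prop :=
  ∃ A : Set α, A ∈ I ∧ Aᶜ ∈ J

/-- `I ⊆↾ J` : the whole ideal `I` has a `J`-union in `I`. -/
def SubRestr {α : Type*} (I J : Set (Set α)) : Prop :=
  ∃ E ∈ I, ∀ A ∈ I, A \ E ∈ J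

/-- A tall ideal. -/
def IsTall {α : Type*} (I : Set (Set α)) : Prop :=
  ∀ X : Set α, X.Infinite → ∃ A ∈ I, (X ∩ A).Infinite

/-- A nowhere tall ideal. -/
def NowhereTall {α : Type*} (J : Set (Set α)) : Prop :=
  ∀ A : Set α, A ∉ J → ∃ B ⊆ A, B.Infinite ∧
    (fun j => j ∩ B) '' J = {s : Set α | s ⊆ B ∧ s.Finite}

/-- An almost disjoint family: infinite members, pairwise finite intersections. -/
def IsADFamily {α : Type*} (C : Set (Set α)) : Prop :=
  (∀ A ∈ C, A.Infinite) ∧ ∀ A ∈ C, ∀ B ∈ C, A ≠ B → (A ∩ B).Finite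

/-- The ideal generated by a family `C` (together with the finite sets). -/
def genIdeal {α : Type*} (C : Set (Set α)) : Set (Set α) :=
  {A | ∃ F : Finset (Set α), ↑F ⊆ C ∧ (A \ ⋃₀ ↑F).Finite}

/-- The `n`-th vertical `{n} × ℕ` in `ℕ × ℕ`. -/
def Vert (n : ℕ) : Set (ℕ × ℕ) := {p | p.1 = n}

/-- A partition of `ℕ × ℕ` into infinitely many infinite sets (indexed by `ℕ`). -/
def IsPartition (A : ℕ → Set (ℕ × ℕ)) : Prop :=
  (∀ n, (A n).Infinite) ∧ (∀ i j, i ≠ j → A i ∩ A j = ∅) ∧ (⋃ n, A n) = Set.univ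

/-- `Fin(A)`: the ideal generated by the partition `A`. -/
def FinPart (A : ℕ → Set (ℕ × ℕ)) : Set (Set (ℕ × ℕ)) :=
  {X | ∃ F : Finset ℕ, (X \ ⋃ n ∈ F, A n).Finite}

/-- `OFin(A)`: sets with finite intersection with each member of `A`. -/
def OFinPart (A : ℕ → Set (ℕ × ℕ)) : Set (Set (ℕ × ℕ)) :=
  {X | ∀ n, (X ∩ A n).Finite}

/-- `FinFin(A)`: the ideal generated by `Fin(A) ∪ OFin(A)`. -/
def FinFinPart (A : ℕ → Set (ℕ × ℕ)) : Set (Set (ℕ × ℕ)) :=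
  {X | ∃ Y ∈ FinPart A, ∃ Z ∈ OFinPart A, X ⊆ Y ∪ Z}

/-- `Sel(A)`: sets meeting each member of `A` in at most `m` points, for some `m`. -/
def SelPart (A : ℕ → Set (ℕ × ℕ)) : Set (Set (ℕ × ℕ)) :=
  {X | ∃ m : ℕ, ∀ n, (X ∩ A n).encard ≤ (m : ℕ∞)}

/-- `ED(A)`: sets meeting all but finitely many members of `A` in at most `m` points. -/
def EDPart (A : ℕ → Set (ℕ × ℕ)) : Set (Set (ℕ × ℕ)) :=
  {X | ∃ m : ℕ, {n | (m : ℕ∞) < (X ∩ A n).encard}.Finite}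

/-- The ideal `Sel` on `ℕ × ℕ` (w.r.t. the vertical partition). -/
def SelI : Set (Set (ℕ × ℕ)) := SelPart Vert

/-- The ideal `ED` on `ℕ × ℕ` (w.r.t. the vertical partition). -/
def EDI : Set (Set (ℕ × ℕ)) := EDPart Vert

/-- The ideal `Fin × ∅` on `ℕ × ℕ`, generated by the verticals. -/
def FinVert : Set (Set (ℕ × ℕ)) := FinPart Vert

/-- A subset of `ℕ × ℕ` is the graph of a partial function from `ℕ` to `ℕ`. -/
def IsPFunGraph (g : Set (ℕ × ℕ)) : Prop :=
  ∀ p ∈ g, ∀ q ∈ g, p.1 = q.1 → p = q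

/-- The domain of (the graph of) a partial function. -/
def pdom (g : Set (ℕ × ℕ)) : Set ℕ := Prod.fst '' g

/-- The graph of a total function `ℕ → ℕ`. -/
def totGraph (f : ℕ → ℕ) : Set (ℕ × ℕ) := {p | f p.1 = p.2}

/-- A `(κ, lam)`-tower of functions: `lam` many pairwise disjoint nonempty
partial functions from `ℕ` to `ℕ`, all with the same domain of cardinality `κ`. -/
def IsTower (κ lam : ℕ∞) (T : Set (Set (ℕ × ℕ))) : Prop :=
  T.encard = lam ∧
  (∀ g ∈ T, IsPFunGraph g ∧ g.Nonempty) ∧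
  (∃ a : Set ℕ, a.encard = κ ∧ ∀ g ∈ T, pdom g = a) ∧
  (∀ g ∈ T, ∀ g' ∈ T, g ≠ g' → g ∩ g' = ∅)

/-- A `(κ, lam)`-tower of `B`-monochromatic functions. -/
def IsMonoTower (B : ℕ → Set (ℕ × ℕ)) (κ lam : ℕ∞) (T : Set (Set (ℕ × ℕ))) : Prop :=
  IsTower κ lam T ∧ ∀ g ∈ T, ∃ n, g ⊆ B n

/-- The (indices of the) colors used by a tower: `C_T`. -/
def towerColors (B : ℕ → Set (ℕ × ℕ)) (T : Set (Set (ℕ × ℕ))) : Set ℕ :=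
  {n | ∃ g ∈ T, g ⊆ B n}

/-- The domain of a tower: `dom(T)`. -/
def towerDom (T : Set (Set (ℕ × ℕ))) : Set ℕ := ⋃ g ∈ T, pdom g

/-- A sequence of essentially different towers: pairwise disjoint color sets
and pairwise disjoint domains. -/
def EssDiff (B : ℕ → Set (ℕ × ℕ)) (T : ℕ → Set (Set (ℕ × ℕ))) : Prop :=
  ∀ i j, i ≠ j → towerColors B (T i) ∩ towerColors B (T j) = ∅ ∧
    towerDom (T i) ∩ towerDom (T j) = ∅

abbrev PP := ℕ →₀ ℕ
abbrev QQ := ℕ × PP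

noncomputable def colr : PP ⊕ QQ → ℕ → QQ
  | Sum.inl x, n => (n, x.erase n)
  | Sum.inr k, _ => k

lemma colr_inj (x y : PP ⊕ QQ) (p q p' q' : ℕ) (h : colr x p = colr y q)
    (h' : colr x p' = colr y q') (hp : p ≠ p') (hq : q ≠ q') : x = y := by
  rcases x with x | x <;> rcases y with y | y
  · simp only [colr, Prod.mk.injEq] at h h'
    obtain ⟨rfl, h⟩ := h
    obtain ⟨rfl, h'⟩ := h'
    congr 1
    ext i
    by_cases hi : i = p
    · have := DFunLike.congr_fun h' i
      have hi' : i ≠ p' := by rintro rfl; exact hp hi.symm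
      simpa [Finsupp.erase_ne hi'] using this
    · have := DFunLike.congr_fun h i
      simpa [Finsupp.erase_ne hi] using this
  · simp only [colr] at h h'
    rw [← h'] at h
    exact absurd (congrArg Prod.fst h) hp
  · simp only [colr] at h h'
    rw [h'] at h
    exact absurd (congrArg Prod.fst h).symm hq
  · simp only [colr] at h
    rw [h]

noncomputable def emb (m L s : ℕ) (x : Fin (m+1) → Fin L) : PP :=
  Finsupp.ofSupportFinite
    (fun i => if h : i < m+1 then (x ⟨i, h⟩ : ℕ) else if i = m+1 then s else 0) (by
      apply (Set.finite_Iio (m+2)).subset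
      intro i hi
      simp only [Function.mem_support] at hi
      by_contra hc
      simp only [Set.mem_Iio, not_lt] at hc
      apply hi
      rw [dif_neg (by omega), if_neg (by omega)])

lemma emb_apply (m L s : ℕ) (x : Fin (m+1) → Fin L) (i : ℕ) :
    emb m L s x i = if h : i < m+1 then (x ⟨i, h⟩ : ℕ) else if i = m+1 then s else 0 := rfl

lemma emb_inj (m L s : ℕ) : Function.Injective (emb m L s) := by
  intro x y h
  ext i
  have := DFunLike.congr_fun h (i : ℕ)
  rw [emb_apply, emb_apply, dif_pos i.2, dif_pos i.2] at this
  exact this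

/-- The key counting fact. -/
lemma key (m t : ℕ) (r : PP → Fin (m+1)) (B : Set QQ) (hB : B.Finite) :
    ∃ k : QQ, k ∉ B ∧ ∃ j : Fin (m+1), ∃ S : Finset PP, t < S.card ∧
      ∀ x ∈ S, r x = j ∧ colr (Sum.inl x) j = k := by
  classical
  obtain ⟨s, hs⟩ : ∃ s : ℕ, s ∉ (fun k : QQ => k.2 (m+1)) '' B :=
    (hB.image _).infinite_compl.nonempty
  set L := (m+1) * t + 1 with hL
  let φ : (Fin (m+1) → Fin L) → Fin (m+1) × (Fin m → Fin L) := fun x =>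
    (r (emb m L s x), (r (emb m L s x)).removeNth x)
  obtain ⟨⟨j, u⟩, -, hj⟩ := Finset.exists_lt_card_fiber_of_mul_lt_card_of_maps_to
    (s := Finset.univ) (t := Finset.univ) (f := φ) (n := t) (fun _ _ => Finset.mem_univ _) (by
      simp only [Finset.card_univ, Fintype.card_prod, Fintype.card_fin, Fintype.card_fun]
      have : 0 < L ^ m := by positivity
      rw [pow_succ]
      nlinarith)
  have hne : (Finset.univ.filter fun x => φ x = (j, u)).Nonempty := by
    rw [← Finset.card_pos]; omega
  obtain ⟨x0, hx0⟩ := hne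
  simp only [Finset.mem_filter, Finset.mem_univ, true_and, φ, Prod.mk.injEq] at hx0
  refine ⟨colr (Sum.inl (emb m L s x0)) j, ?_, j,
    (Finset.univ.filter fun x => φ x = (j, u)).map ⟨emb m L s, emb_inj m L s⟩, ?_, ?_⟩
  · intro hk
    apply hs
    refine ⟨_, hk, ?_⟩
    have : m + 1 ≠ (j : ℕ) := by have := j.2; omega
    simp [colr, Finsupp.erase_ne this, emb_apply]
  · rw [Finset.card_map]; exact hj
  · intro x hx
    simp only [Finset.mem_map, Finset.mem_filter, Finset.mem_univ, true_and, φ, Prod.mk.injEq,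
      Function.Embedding.coeFn_mk] at hx
    obtain ⟨y, ⟨h1, h2⟩, rfl⟩ := hx
    refine ⟨h1, ?_⟩
    rw [h1] at h2
    obtain ⟨h3, h4⟩ := hx0
    rw [h3] at h4
    simp only [colr, Prod.mk.injEq, true_and]
    ext i
    by_cases hi : i = j
    · subst hi; simp
    · rw [Finsupp.erase_ne hi, Finsupp.erase_ne hi, emb_apply, emb_apply]
      by_cases h : i < m+1
      · rw [dif_pos h, dif_pos h]
        obtain ⟨z, hz⟩ := Fin.exists_succAbove_eq (x := (⟨i, h⟩ : Fin (m+1))) (y := j)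
          (by intro hh; apply hi; rw [← hh])
        have := congrFun (h2.trans h4.symm) z
        simp only [Fin.removeNth] at this
        rw [hz] at this
        rw [this]
      · rw [dif_neg h, dif_neg h]

theorem stmt19 :
    ∃ E : ℕ → Set (ℕ × ℕ), IsPartition E ∧
      (∀ k : ℕ, 3 ≤ k → ∀ T : Set (Set (ℕ × ℕ)),
        ¬ IsMonoTower E (k : ℕ∞) (k : ℕ∞) T) ∧
      ¬ IsPJIdeal SelI (SelPart E) ∧ ¬ IsPJIdeal SelI (EDPart E) := by
  classical
  obtain ⟨e⟩ : Nonempty (ℕ ≃ PP ⊕ QQ) := nonempty_equiv_of_countable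
  obtain ⟨d⟩ : Nonempty (ℕ ≃ QQ) := nonempty_equiv_of_countable
  let E : ℕ → Set (ℕ × ℕ) := fun n => {p | colr (e p.1) p.2 = d n}
  have hED : ¬ IsPJIdeal SelI (EDPart E) := by
    intro hP
    obtain ⟨A, ⟨m, hm⟩, hA⟩ := hP (fun n => {p | p.2 = n}) (by
      intro n
      refine ⟨1, fun k => ?_⟩
      have : ({p : ℕ × ℕ | p.2 = n} ∩ Vert k) ⊆ {(k, n)} := by
        rintro ⟨a, b⟩ ⟨h1, h2⟩
        simp only [Vert, Set.mem_setOf_eq] at h1 h2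
        simp [h1, h2]
      exact (Set.encard_le_encard this).trans (by simp))
    choose t ht using hA
    have hr : ∀ x : PP, ∃ j : Fin (m+1), (e.symm (Sum.inl x), (j : ℕ)) ∉ A := by
      intro x
      by_contra! hc
      have h1 := hm (e.symm (Sum.inl x))
      have h2 : Set.range (fun j : Fin (m+1) => (e.symm (Sum.inl x), (j : ℕ))) ⊆
          A ∩ Vert (e.symm (Sum.inl x)) := by
        rintro _ ⟨j, rfl⟩
        exact ⟨hc j, rfl⟩
      have h3 := (Set.encard_le_encard h2).trans h1
      rw [← Set.image_univ, Function.Injective.encard_image (by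
        intro a b hab
        simpa [Fin.ext_iff] using hab), Set.encard_univ] at h3
      simp at h3
      have h4 : ((m + 1 : ℕ) : ℕ∞) ≤ (m : ℕ∞) := by exact_mod_cast h3
      have := Nat.cast_le.mp h4
      omega
    choose r hr using hr
    let tt := ∑ j ∈ Finset.range (m+1), t j
    let B : Set QQ := ⋃ j ∈ Finset.range (m+1),
      d '' {n | (t j : ℕ∞) < (({p : ℕ × ℕ | p.2 = j} \ A) ∩ E n).encard}
    have hB : B.Finite := by
      apply Set.Finite.biUnion (Finset.finite_toSet _)
      intro j _
      exact (ht j).image _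
    obtain ⟨k, hk, j, S, hS, hS'⟩ := key m tt r B hB
    apply hk
    have hjm : (j : ℕ) ∈ Finset.range (m+1) := Finset.mem_range.mpr j.2
    refine Set.mem_biUnion (x := (j : ℕ)) hjm ⟨d.symm k, ?_, by simp⟩
    simp only [Set.mem_setOf_eq]
    have hle : t j ≤ tt := Finset.single_le_sum (f := t) (fun _ _ => Nat.zero_le _) hjm
    have hsub : ((fun x : PP => (e.symm (Sum.inl x), (j : ℕ))) '' (S : Set PP)) ⊆
        ({p : ℕ × ℕ | p.2 = j} \ A) ∩ E (d.symm k) := by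
      rintro _ ⟨x, hx, rfl⟩
      obtain ⟨h1, h2⟩ := hS' x hx
      refine ⟨⟨rfl, ?_⟩, ?_⟩
      · rw [← h1]; exact hr x
      · simp [E, h2]
    refine lt_of_lt_of_le ?_ (Set.encard_le_encard hsub)
    rw [Function.Injective.encard_image (by
        intro a b hab
        simpa using hab), Set.encard_coe_eq_coe_finsetCard]
    exact_mod_cast lt_of_le_of_lt hle hS
  refine ⟨E, ⟨?_, ?_, ?_⟩, ?_, ?_, hED⟩
  · intro n
    refine (Set.infinite_range_of_injective
      (f := fun i : ℕ => (e.symm (Sum.inr (d n)), i)) ?_).mono ?_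
    · intro a b hab
      simpa using hab
    · rintro _ ⟨i, rfl⟩
      simp [E, colr]
  · intro i j hij
    ext p
    simp only [E, Set.mem_inter_iff, Set.mem_setOf_eq, Set.mem_empty_iff_false, iff_false, not_and]
    intro h1 h2
    exact hij (d.injective (h1.symm.trans h2))
  · ext p
    simp only [Set.mem_iUnion, Set.mem_univ, iff_true]
    exact ⟨d.symm (colr (e p.1) p.2), by simp [E]⟩
  · rintro k hk T ⟨⟨hT, hfun, ⟨a, ha, hdom⟩, hdisj⟩, hmono⟩
    have h1 : (1 : ℕ∞) < k := by exact_mod_cast (by omega : 1 < k)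
    obtain ⟨g, g', hg, hg', hne⟩ := Set.one_lt_encard_iff.mp (hT ▸ h1)
    obtain ⟨x, y, hx, hy, hxy⟩ := Set.one_lt_encard_iff.mp (ha ▸ h1)
    have get : ∀ g ∈ T, ∀ z ∈ a, ∃ p, (z, p) ∈ g := by
      intro g hg z hz
      rw [← hdom g hg] at hz
      obtain ⟨⟨z', p⟩, hp, rfl⟩ := hz
      exact ⟨p, hp⟩
    obtain ⟨p, hp⟩ := get g hg x hx
    obtain ⟨q, hq⟩ := get g hg y hy
    obtain ⟨p', hp'⟩ := get g' hg' x hx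
    obtain ⟨q', hq'⟩ := get g' hg' y hy
    obtain ⟨n, hn⟩ := hmono g hg
    obtain ⟨n', hn'⟩ := hmono g' hg'
    have hd := hdisj g hg g' hg' hne
    have hpp : p ≠ p' := by
      rintro rfl
      have : (x, p) ∈ g ∩ g' := ⟨hp, hp'⟩
      rw [hd] at this; exact this
    have hqq : q ≠ q' := by
      rintro rfl
      have : (y, q) ∈ g ∩ g' := ⟨hq, hq'⟩
      rw [hd] at this; exact this
    apply hxy
    apply e.injective
    exact colr_inj _ _ p q p' q' ((hn hp).trans (hn hq).symm) ((hn' hp').trans (hn' hq').symm) hpp hqq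
  · intro hP
    apply hED
    intro f hf
    obtain ⟨A, hA, h⟩ := hP f hf
    refine ⟨A, hA, fun n => ?_⟩
    obtain ⟨m, hm⟩ := h n
    refine ⟨m, ?_⟩
    convert Set.finite_empty
    ext i
    simpa using hm i
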